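/- arXiv:1908.01690 — 4 statements merged into one kernel-verified Lean document; each statement's English description precedes it below -/
import Mathlib

section
/- Let p be a prime with p ≠ 2 and p ≠ 5 satisfying p ≡ ±2 (mod 5), let a and n be positive integers with a even and n ≢ 0 (mod z(p)), and let A = ⌊n(p^a − 1)/(p^{ν_p(n)}·z(p))⌋. Then p divides C(p^a n, n)_F if and only if s_p(A) > (a/2)(p − 1). -/
/-!
Put `z = z(p)` and `e = ν_p(F_z)`. By lifting the exponent, `ν_p(F_{kz}) = e + ν_p(k)`
(`padicValNat_fib_mul`), so `ν_p(F_1 ⋯ F_N) = e ⌊N/z⌋ + ν_p(⌊N/z⌋!)` (`padicValNat_fibProd`).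

For `p ≡ ±2 (mod 5)` one has `z ∣ p + 1` (`prime_dvd_fib_succ`), hence `z ∣ p^a - 1` for even `a`.
Therefore `⌊p^a n/z⌋ = M + ⌊n/z⌋` with `M = n(p^a - 1)/z`, the terms in `e` cancel, and
`C(p^a n, n)_F` has the same `p`-adic valuation as the ordinary binomial coefficient
`C(M + ⌊n/z⌋, ⌊n/z⌋)`. By Kummer's theorem, `p - 1` times this valuation is
`s_p(M) + s_p(⌊n/z⌋) - s_p(⌊p^a n/z⌋)`. Here `s_p(M) = s_p(A)`, because `M` is `A` times a power
of `p`, and `s_p(⌊p^a n/z⌋) = s_p(⌊n/z⌋) + (a/2)(p - 1)`, because multiplying by `p²` before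
dividing by `z` appends two digits with sum `p - 1` (`digitSum_sq_mul_div`).
-/


/-- The Fibonomial coefficient `C(m,k)_F = (F_{m-k+1} ⋯ F_m)/(F_1 ⋯ F_k)`,
with `C(m,0)_F = 1` and `C(m,k)_F = 0` for `k > m`. -/
def fibBinom (m k : ℕ) : ℕ :=
  (∏ i ∈ Finset.range k, Nat.fib (m - i)) / ∏ i ∈ Finset.range k, Nat.fib (i + 1)

/-- The rank of appearance `z(n)`: the least positive `m` with `n ∣ F_m`. -/
noncomputable def fibRank (n : ℕ) : ℕ := sInf {m : ℕ | 0 < m ∧ n ∣ Nat.fib m}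

/-- The sum of the digits of `n` in base `q`. -/
def digitSum (q n : ℕ) : ℕ := (Nat.digits q n).sum

/-! ### Exactness of the Fibonomial quotient -/

/-- The product `F_1 ⋯ F_N`, the Fibonacci analogue of `N!`. -/
def fibProd (N : ℕ) : ℕ := ∏ i ∈ Finset.range N, Nat.fib (i + 1)

lemma fibProd_succ (N : ℕ) : fibProd (N + 1) = fibProd N * Nat.fib (N + 1) :=
  Finset.prod_range_succ _ _

lemma fibProd_ne_zero (N : ℕ) : fibProd N ≠ 0 :=
  Finset.prod_ne_zero_iff.2 fun _ _ => (Nat.fib_pos.2 (Nat.succ_pos _)).ne'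

lemma fibProd_add (a b : ℕ) :
    fibProd (a + b) = fibProd b * ∏ i ∈ Finset.range a, Nat.fib (a + b - i) := by
  induction a with
  | zero => simp
  | succ a ih =>
    rw [show a + 1 + b = (a + b) + 1 by ring, fibProd_succ, ih, Finset.prod_range_succ']
    simp only [Nat.add_sub_add_right, Nat.sub_zero, mul_assoc]

lemma fibProd_mul_dvd (s : ℕ) : ∀ a b, a + b = s → fibProd a * fibProd b ∣ fibProd s := by
  induction s with
  | zero =>
    intro a b h
    obtain ⟨rfl, rfl⟩ : a = 0 ∧ b = 0 := by omega
    simp [fibProd]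
  | succ s ih =>
    intro a b h
    rcases a with _ | a
    · simp only [zero_add] at h
      simp [h, fibProd]
    rcases b with _ | b
    · simp only [add_zero] at h
      simp [h, fibProd]
    obtain ⟨c, hc⟩ := ih a (b + 1) (by omega)
    obtain ⟨d, hd⟩ := ih (a + 1) b (by omega)
    have hs : s + 1 = a + (b + 1) + 1 := by omega
    -- `F_{a+b+2} = F_a F_{b+1} + F_{a+1} F_{b+2}` is the analogue of Pascal's rule.
    have hF : Nat.fib (s + 1) = Nat.fib a * Nat.fib (b + 1) + Nat.fib (a + 1) * Nat.fib (b + 2) := by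
      rw [hs, Nat.fib_add]
    refine ⟨d * Nat.fib a + c * Nat.fib (b + 2), ?_⟩
    calc fibProd (s + 1)
        = fibProd s * Nat.fib a * Nat.fib (b + 1)
            + fibProd s * (Nat.fib (a + 1) * Nat.fib (b + 2)) := by
          rw [fibProd_succ, hF]; ring
      _ = fibProd (a + 1) * fibProd b * d * Nat.fib a * Nat.fib (b + 1)
            + fibProd a * fibProd (b + 1) * c * (Nat.fib (a + 1) * Nat.fib (b + 2)) := by
          rw [← hd, ← hc]
      _ = _ := by rw [fibProd_succ a, fibProd_succ b]; ring

/-- The quotient defining `fibBinom` is exact. -/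
lemma fibProd_add_eq (k m : ℕ) :
    fibProd (k + m) = fibBinom (k + m) k * fibProd k * fibProd m := by
  have h1 := fibProd_add k m
  obtain ⟨c, hc⟩ := fibProd_mul_dvd (k + m) k m rfl
  have hk := fibProd_ne_zero k
  have hm := fibProd_ne_zero m
  have h2 : ∏ i ∈ Finset.range k, Nat.fib (k + m - i) = fibProd k * c := by
    apply Nat.eq_of_mul_eq_mul_left (Nat.pos_of_ne_zero hm)
    rw [← h1, hc]; ring
  have h3 : fibBinom (k + m) k = c := by
    change (∏ i ∈ Finset.range k, Nat.fib (k + m - i)) / fibProd k = c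
    rw [h2, Nat.mul_div_cancel_left _ (Nat.pos_of_ne_zero hk)]
  rw [h3, hc]; ring

/-! ### The rank of appearance -/

/-- If Frobenius maps a square root `s` of `5` to `-s`, it exchanges the two roots
`φ, ψ = (1 ± s)/2` of `X² - X - 1`, so `φ^{p+1} = φψ = ψ^{p+1}` and `s F_{p+1} = 0`. -/
lemma fib_succ_eq_zero_of_pow_eq_neg {K : Type*} [Field K] {p : ℕ} [Fact p.Prime] [CharP K p]
    (h2K : (2 : K) ≠ 0) (h2p : (2 : K) ^ p = 2) {s : K} (hs0 : s ≠ 0) (hs : s ^ 2 = 5)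
    (hsp : s ^ p = -s) : (Nat.fib (p + 1) : K) = 0 := by
  -- Binet's formula for the roots `(1 ± s)/2`, together with its shift for the induction.
  have binet : ∀ n : ℕ, s * (Nat.fib n : K) = ((1 + s) / 2) ^ n - ((1 - s) / 2) ^ n ∧
      s * (Nat.fib (n + 1) : K) = ((1 + s) / 2) ^ (n + 1) - ((1 - s) / 2) ^ (n + 1) := by
    intro n
    induction n with
    | zero =>
      refine ⟨by simp, ?_⟩
      simp only [zero_add, Nat.fib_one, Nat.cast_one, pow_one, mul_one]
      field_simp
      ring
    | succ n ih =>
      refine ⟨ih.2, ?_⟩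
      have e1 : ((1 + s) / 2) ^ 2 = (1 + s) / 2 + 1 := by
        field_simp; linear_combination hs
      have e2 : ((1 - s) / 2) ^ 2 = (1 - s) / 2 + 1 := by
        field_simp; linear_combination hs
      rw [Nat.fib_add_two]
      push_cast
      linear_combination ih.1 + ih.2 - ((1 + s) / 2) ^ n * e1 + ((1 - s) / 2) ^ n * e2
  have f1 : ((1 + s) / 2) ^ p = (1 - s) / 2 := by
    rw [div_pow, add_pow_char, one_pow, hsp, h2p]; ring
  have f2 : ((1 - s) / 2) ^ p = (1 + s) / 2 := by
    rw [div_pow, sub_pow_char, one_pow, hsp, h2p]; ring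
  have h0 : s * (Nat.fib (p + 1) : K) = 0 := by
    rw [(binet (p + 1)).1, pow_succ, pow_succ, f1, f2]; ring
  exact (mul_eq_zero.1 h0).resolve_left hs0

/-- A prime `p ≡ ±2 (mod 5)` divides `F_{p+1}`: by quadratic reciprocity `5` is a nonresidue
modulo `p`, so Frobenius changes the sign of its square roots. -/
lemma prime_dvd_fib_succ {p : ℕ} (hp : p.Prime) (hp2 : p ≠ 2) (hp5 : p ≠ 5)
    (hmod : p % 5 = 2 ∨ p % 5 = 3) : p ∣ Nat.fib (p + 1) := by
  have hsq5 : (∀ r : ZMod 5, r * r ≠ ((2 : ℕ) : ZMod 5)) ∧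
      ∀ r : ZMod 5, r * r ≠ ((3 : ℕ) : ZMod 5) := by decide
  have : Fact p.Prime := ⟨hp⟩
  have : Fact (Nat.Prime 5) := ⟨by norm_num⟩
  have h5 : ((5 : ℕ) : ZMod p) ≠ 0 := by
    rw [Ne, ZMod.natCast_eq_zero_iff, Nat.prime_dvd_prime_iff_eq hp (by norm_num)]
    exact hp5
  have h2 : ((2 : ℕ) : ZMod p) ≠ 0 := by
    rw [Ne, ZMod.natCast_eq_zero_iff, Nat.prime_dvd_prime_iff_eq hp Nat.prime_two]
    exact hp2
  have hnsq : ¬ IsSquare ((5 : ℕ) : ZMod p) := by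
    rw [← ZMod.exists_sq_eq_prime_iff_of_mod_four_eq_one (p := 5) (q := p) (by norm_num) hp2]
    have : (p : ZMod 5) = ((p % 5 : ℕ) : ZMod 5) := by simp
    rw [this]
    rcases hmod with h | h <;> rw [h]
    · exact fun ⟨r, hr⟩ => hsq5.1 r hr.symm
    · exact fun ⟨r, hr⟩ => hsq5.2 r hr.symm
  have hpow : ((5 : ℕ) : ZMod p) ^ (p / 2) = -1 := by
    rcases ZMod.pow_div_two_eq_neg_one_or_one p h5 with h | h
    · exact absurd ((ZMod.euler_criterion p h5).2 h) hnsq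
    · exact h
  let ι := algebraMap (ZMod p) (AlgebraicClosure (ZMod p))
  have : CharP (AlgebraicClosure (ZMod p)) p := charP_of_injective_algebraMap ι.injective p
  have hpowK : (5 : AlgebraicClosure (ZMod p)) ^ (p / 2) = -1 := by
    have := congrArg ι hpow
    rwa [map_pow, map_natCast, map_neg, map_one] at this
  have h5K : (5 : AlgebraicClosure (ZMod p)) ≠ 0 := by
    have := (map_ne_zero ι).2 h5
    rwa [map_natCast] at this
  have h2K : (2 : AlgebraicClosure (ZMod p)) ≠ 0 := by
    have := (map_ne_zero ι).2 h2
    rwa [map_natCast] at this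
  have h2p : (2 : AlgebraicClosure (ZMod p)) ^ p = 2 := by
    have := congrArg ι (ZMod.pow_card ((2 : ℕ) : ZMod p))
    rwa [map_pow, map_natCast] at this
  obtain ⟨s, hs⟩ :=
    IsAlgClosed.exists_pow_nat_eq (5 : AlgebraicClosure (ZMod p)) (n := 2) (by norm_num)
  have hs0 : s ≠ 0 := by rintro rfl; apply h5K; rw [← hs]; simp
  have hsp : s ^ p = -s := by
    have hodd : p = 2 * (p / 2) + 1 := by have := hp.eq_two_or_odd; omega
    calc s ^ p = s ^ (2 * (p / 2) + 1) := by rw [← hodd]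
      _ = -s := by rw [pow_succ, pow_mul, hs, hpowK]; ring
  rw [← CharP.cast_eq_zero_iff (AlgebraicClosure (ZMod p)) p]
  exact fib_succ_eq_zero_of_pow_eq_neg h2K h2p hs0 hs hsp

lemma fibRank_spec {q m : ℕ} (hm : 0 < m) (h : q ∣ Nat.fib m) :
    0 < fibRank q ∧ q ∣ Nat.fib (fibRank q) :=
  Nat.sInf_mem (s := {m : ℕ | 0 < m ∧ q ∣ Nat.fib m}) ⟨m, hm, h⟩

lemma dvd_fib_iff {q : ℕ} (hz : 0 < fibRank q) (h : q ∣ Nat.fib (fibRank q)) (m : ℕ) :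
    q ∣ Nat.fib m ↔ fibRank q ∣ m := by
  refine ⟨fun hm => ?_, fun hm => h.trans (Nat.fib_dvd _ _ hm)⟩
  have hg : q ∣ Nat.fib (Nat.gcd (fibRank q) m) := by
    rw [Nat.fib_gcd]; exact Nat.dvd_gcd h hm
  have hle : fibRank q ≤ Nat.gcd (fibRank q) m :=
    Nat.sInf_le (s := {m : ℕ | 0 < m ∧ q ∣ Nat.fib m}) ⟨Nat.gcd_pos_of_pos_left _ hz, hg⟩
  have := Nat.le_antisymm hle (Nat.le_of_dvd hz (Nat.gcd_dvd_left _ _))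
  rw [this]; exact Nat.gcd_dvd_right _ _

/-! ### Lifting the exponent for Fibonacci numbers -/

/-- With `x = F_{m+1}` and `y = F_m`, the leading terms of `F_{k(m+1)} = ∑ C(k,j) x^j y^{k-j} F_j`
modulo `x³`, and of the analogous expansion of `F_{k(m+1)+1}` modulo `x²`, for `k ≥ 2`. -/
lemma fib_mul_expansion (m k : ℕ) : ∃ t s : ℕ,
    Nat.fib ((k + 2) * (m + 1)) = (k + 2) * Nat.fib (m + 1) * Nat.fib m ^ (k + 1)
      + (k + 2).choose 2 * Nat.fib (m + 1) ^ 2 * Nat.fib m ^ k + Nat.fib (m + 1) ^ 3 * t ∧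
    Nat.fib ((k + 2) * (m + 1) + 1) = Nat.fib m ^ (k + 2)
      + (k + 2) * Nat.fib (m + 1) * Nat.fib m ^ (k + 1) + Nat.fib (m + 1) ^ 2 * s := by
  induction k with
  | zero =>
    refine ⟨0, 2, ?_, ?_⟩
    · rw [show (0 + 2) * (m + 1) = (m + 1) + m + 1 by ring, Nat.fib_add, Nat.fib_add_two]
      simp; ring
    · rw [show (0 + 2) * (m + 1) + 1 = (m + 1) + (m + 1) + 1 by ring, Nat.fib_add,
        Nat.fib_add_two]
      ring
  | succ k ih =>
    obtain ⟨t, s, h1, h2⟩ := ih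
    have hc : (k + 1 + 2).choose 2 = (k + 2) + (k + 2).choose 2 := by
      rw [show k + 1 + 2 = (k + 2) + 1 by ring, Nat.choose_succ_succ' (k + 2) 1]; simp
    refine ⟨t * Nat.fib m + s, s * Nat.fib (m + 1) + s * Nat.fib m
      + (k + 2) * Nat.fib m ^ (k + 1) + (k + 2) * Nat.fib m ^ (k + 1)
      + (k + 2).choose 2 * Nat.fib (m + 1) * Nat.fib m ^ k + Nat.fib (m + 1) ^ 2 * t, ?_, ?_⟩
    · rw [show (k + 1 + 2) * (m + 1) = (k + 2) * (m + 1) + m + 1 by ring, Nat.fib_add, h1, h2, hc]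
      ring
    · rw [show (k + 1 + 2) * (m + 1) + 1 = (k + 2) * (m + 1) + (m + 1) + 1 by ring, Nat.fib_add,
        h1, h2, Nat.fib_add_two]
      ring

lemma not_dvd_fib_pred {p m : ℕ} (hp : p.Prime) (h : p ∣ Nat.fib (m + 1)) : ¬ p ∣ Nat.fib m := by
  intro h'
  exact Nat.Prime.not_coprime_iff_dvd.2 ⟨p, hp, h', h⟩ (Nat.fib_coprime_fib_succ m)

lemma padicValNat_fib_mul_of_not_dvd {p m k : ℕ} (hp : p.Prime) (h : p ∣ Nat.fib (m + 1))
    (hk : ¬ p ∣ k) :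
    padicValNat p (Nat.fib (k * (m + 1))) = padicValNat p (Nat.fib (m + 1)) := by
  have : Fact p.Prime := ⟨hp⟩
  rcases k with _ | _ | k
  · simp at hk
  · simp
  obtain ⟨t, s, h1, -⟩ := fib_mul_expansion m k
  have hx : Nat.fib (m + 1) ≠ 0 := (Nat.fib_pos.2 (Nat.succ_pos _)).ne'
  have h2 : Nat.fib ((k + 2) * (m + 1)) = Nat.fib (m + 1) * ((k + 2) * Nat.fib m ^ (k + 1)
      + Nat.fib (m + 1) * ((k + 2).choose 2 * Nat.fib m ^ k + Nat.fib (m + 1) * t)) := by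
    rw [h1]; ring
  have h3 : ¬ p ∣ (k + 2) * Nat.fib m ^ (k + 1)
      + Nat.fib (m + 1) * ((k + 2).choose 2 * Nat.fib m ^ k + Nat.fib (m + 1) * t) := by
    rw [← Nat.dvd_add_iff_left (h.mul_right _), hp.dvd_mul]
    rintro (h' | h')
    · exact hk h'
    · exact not_dvd_fib_pred hp h (hp.dvd_of_dvd_pow h')
  rw [h2, padicValNat.mul hx (fun h0 => h3 (by rw [h0]; exact dvd_zero p)),
    padicValNat.eq_zero_of_not_dvd h3, add_zero]

lemma padicValNat_fib_prime_mul {p m : ℕ} (hp : p.Prime) (hp2 : p ≠ 2)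
    (h : p ∣ Nat.fib (m + 1)) :
    padicValNat p (Nat.fib (p * (m + 1))) = padicValNat p (Nat.fib (m + 1)) + 1 := by
  have : Fact p.Prime := ⟨hp⟩
  obtain ⟨k, rfl⟩ : ∃ k, p = k + 2 := ⟨p - 2, by have := hp.two_le; omega⟩
  obtain ⟨t, s, h1, -⟩ := fib_mul_expansion m k
  have hx : Nat.fib (m + 1) ≠ 0 := (Nat.fib_pos.2 (Nat.succ_pos _)).ne'
  obtain ⟨c, hc⟩ : (k + 2) ∣ (k + 2).choose 2 :=
    hp.dvd_choose_self (by norm_num) (by have := hp.two_le; omega)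
  obtain ⟨w, hw⟩ := h
  have h2 : Nat.fib ((k + 2) * (m + 1)) = (k + 2) * (Nat.fib (m + 1) * (Nat.fib m ^ (k + 1)
      + Nat.fib (m + 1) * (c * Nat.fib m ^ k + w * t))) := by
    rw [h1, hc, pow_succ (Nat.fib (m + 1)) 2]
    nth_rw 4 [hw]
    ring
  have h3 : ¬ (k + 2) ∣ Nat.fib m ^ (k + 1)
      + Nat.fib (m + 1) * (c * Nat.fib m ^ k + w * t) := by
    rw [← Nat.dvd_add_iff_left (Dvd.dvd.mul_right ⟨w, hw⟩ _)]
    exact fun h' => not_dvd_fib_pred hp ⟨w, hw⟩ (hp.dvd_of_dvd_pow h')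
  have h4 : Nat.fib m ^ (k + 1) + Nat.fib (m + 1) * (c * Nat.fib m ^ k + w * t) ≠ 0 :=
    fun h0 => h3 (h0 ▸ dvd_zero _)
  rw [h2, padicValNat.mul hp.ne_zero (mul_ne_zero hx h4), padicValNat.mul hx h4,
    padicValNat.eq_zero_of_not_dvd h3, padicValNat.self hp.one_lt]
  ring

lemma padicValNat_fib_mul {p z : ℕ} (hp : p.Prime) (hp2 : p ≠ 2) (hz : 0 < z)
    (h : p ∣ Nat.fib z) (k : ℕ) (hk : 0 < k) :
    padicValNat p (Nat.fib (k * z)) = padicValNat p (Nat.fib z) + padicValNat p k := by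
  have : Fact p.Prime := ⟨hp⟩
  induction k using Nat.strong_induction_on with
  | _ k ih =>
    by_cases hd : p ∣ k
    · obtain ⟨j, rfl⟩ := hd
      have hj : 0 < j := Nat.pos_of_mul_pos_left hk
      obtain ⟨m, hm⟩ : ∃ m, j * z = m + 1 := ⟨j * z - 1, by have := Nat.mul_pos hj hz; omega⟩
      have hdvd : p ∣ Nat.fib (m + 1) := hm ▸ h.trans (Nat.fib_dvd _ _ (Dvd.intro_left j rfl))
      have hlt : j < p * j := by nlinarith [hp.two_le]
      rw [mul_assoc, hm, padicValNat_fib_prime_mul hp hp2 hdvd, ← hm, ih j hlt hj,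
        padicValNat.mul hp.ne_zero hj.ne', padicValNat.self hp.one_lt]
      ring
    · obtain ⟨m, rfl⟩ : ∃ m, z = m + 1 := ⟨z - 1, by omega⟩
      rw [padicValNat_fib_mul_of_not_dvd hp h hd, padicValNat.eq_zero_of_not_dvd hd, add_zero]

/-- The Fibonacci analogue of Legendre's formula. -/
lemma padicValNat_fibProd {p : ℕ} (hp : p.Prime) (hp2 : p ≠ 2) (hz : 0 < fibRank p)
    (h : p ∣ Nat.fib (fibRank p)) (N : ℕ) :
    padicValNat p (fibProd N) = padicValNat p (Nat.fib (fibRank p)) * (N / fibRank p)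
      + padicValNat p (N / fibRank p).factorial := by
  have : Fact p.Prime := ⟨hp⟩
  induction N with
  | zero => simp [fibProd]
  | succ N ih =>
    rw [fibProd_succ, padicValNat.mul (fibProd_ne_zero N) (Nat.fib_pos.2 (Nat.succ_pos _)).ne', ih,
      Nat.succ_div]
    split_ifs with hd
    · have hq : N + 1 = (N / fibRank p + 1) * fibRank p := by
        have := Nat.div_mul_cancel hd
        rw [Nat.succ_div, if_pos hd] at this
        exact this.symm
      rw [congrArg Nat.fib hq, padicValNat_fib_mul hp hp2 hz h _ (Nat.succ_pos _),
        Nat.factorial_succ, padicValNat.mul (Nat.succ_ne_zero _) (Nat.factorial_ne_zero _)]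
      ring
    · rw [padicValNat.eq_zero_of_not_dvd (mt (dvd_fib_iff hz h _).1 hd)]
      simp

/-! ### Digit sums -/

lemma digitSum_add_mul {q : ℕ} (hq : 1 < q) {d : ℕ} (hd : d < q) (x : ℕ) :
    digitSum q (d + q * x) = d + digitSum q x := by
  unfold digitSum
  by_cases h : d = 0 ∧ x = 0
  · simp [h.1, h.2]
  · rw [Nat.digits_add q hq d x hd (by tauto)]
    simp

lemma digitSum_pow_mul {q : ℕ} (hq : 1 < q) (v x : ℕ) :
    digitSum q (q ^ v * x) = digitSum q x := by
  induction v with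
  | zero => simp
  | succ v ih =>
    have := digitSum_add_mul hq (d := 0) (by omega) (q ^ v * x)
    rw [zero_add, zero_add] at this
    rw [← ih, ← this]; congr 1; ring

/-- If `z ∣ p + 1` and `N = Qz + r` with `0 < r < z`, then with `c = r(p+1)/z` one has
`⌊p²N/z⌋ = p²Q + (c-1)p + (p-c)`, so two digits with sum `p - 1` are appended to `⌊N/z⌋`. -/
lemma digitSum_sq_mul_div {p z N : ℕ} (hp : 1 < p) (hz : z ∣ p + 1) (hN : ¬ z ∣ N) :
    digitSum p (p ^ 2 * N / z) = digitSum p (N / z) + (p - 1) := by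
  obtain ⟨w, hw⟩ := hz
  have hz0 : 0 < z := Nat.pos_of_ne_zero (by rintro rfl; simp at hw)
  have hr0 : 0 < N % z := Nat.pos_of_ne_zero fun h => hN (Nat.dvd_of_mod_eq_zero h)
  have hrz := Nat.mod_lt N hz0
  have hw0 : 0 < w := Nat.pos_of_ne_zero (by rintro rfl; simp at hw)
  obtain ⟨c, hc⟩ : ∃ c, w * (N % z) = c + 1 :=
    ⟨w * (N % z) - 1, by have := Nat.mul_pos hw0 hr0; omega⟩
  have hcp : c + 1 < p + 1 := by rw [← hc, hw]; nlinarith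
  obtain ⟨d, hd⟩ : ∃ d, p = c + 1 + d := ⟨p - (c + 1), by omega⟩
  have key : p ^ 2 * N = N % z + z * (d + p * (c + p * (N / z))) := by
    have hN' := Nat.mod_add_div N z
    generalize N % z = r at *
    generalize N / z = Q at *
    subst hN'
    zify at *
    have hd' : (d : ℤ) = p - w * r := by linear_combination -hd + hc
    have hc' : (c : ℤ) = w * r - 1 := by linear_combination -hc
    rw [hd', hc']
    linear_combination (r * (p - 1) : ℤ) * hw
  rw [key, Nat.add_mul_div_left _ _ hz0, Nat.div_eq_of_lt hrz, zero_add,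
    digitSum_add_mul hp (by omega), digitSum_add_mul hp (by omega)]
  omega

lemma digitSum_pow_mul_div {p z n : ℕ} (hp : 1 < p) (hz : z ∣ p + 1) (hn : ¬ z ∣ n) (b : ℕ) :
    digitSum p (p ^ (2 * b) * n / z) = digitSum p (n / z) + b * (p - 1) := by
  have hcop : Nat.Coprime z p :=
    Nat.Coprime.coprime_dvd_left hz (by simp)
  induction b with
  | zero => simp
  | succ b ih =>
    have hN : ¬ z ∣ p ^ (2 * b) * n := fun h =>
      hn ((Nat.Coprime.pow_right _ hcop).dvd_of_dvd_mul_left h)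
    rw [show p ^ (2 * (b + 1)) * n = p ^ 2 * (p ^ (2 * b) * n) by ring,
      digitSum_sq_mul_div hp hz hN, ih]
    ring

/-! ### The divisibility criterion -/

theorem prime_dvd_fibonomial_iff_pm_two_a_even
    (p a n : ℕ) (hp : p.Prime) (hp2 : p ≠ 2) (hp5 : p ≠ 5)
    (ha : 0 < a) (hn : 0 < n) (haeven : Even a)
    (hmod : p % 5 = 2 ∨ p % 5 = 3)
    (hns : ¬ fibRank p ∣ n)
    (A : ℕ)
    (hA : A = n * (p ^ a - 1) / (p ^ padicValNat p n * fibRank p)) :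
    p ∣ fibBinom (p ^ a * n) n ↔ (a / 2) * (p - 1) < digitSum p A := by
  have : Fact p.Prime := ⟨hp⟩
  have hp1 := hp.one_lt
  have hfib := prime_dvd_fib_succ hp hp2 hp5 hmod
  obtain ⟨hz, hpz⟩ := fibRank_spec (Nat.succ_pos p) hfib
  have hzp : fibRank p ∣ p + 1 := (dvd_fib_iff hz hpz _).1 hfib
  have hleg := padicValNat_fibProd hp hp2 hz hpz
  obtain ⟨b, rfl⟩ : ∃ b, a = 2 * b := haeven.exists_two_nsmul _ |>.imp fun b hb => by simpa using hb
  have hdig := digitSum_pow_mul_div hp1 hzp hns b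
  generalize fibRank p = z at *
  -- `z ∣ p + 1 ∣ p² - 1 ∣ p^{2b} - 1`
  obtain ⟨q, hq⟩ : z ∣ p ^ (2 * b) - 1 := by
    have h1 : p ^ 2 - 1 ∣ (p ^ 2) ^ b - 1 := by simpa using Nat.sub_dvd_pow_sub_pow (p ^ 2) 1 b
    have h2 : p + 1 ∣ p ^ 2 - 1 := ⟨p - 1, by simpa using Nat.sq_sub_sq p 1⟩
    rw [pow_mul]
    exact hzp.trans (h2.trans h1)
  have hpow : p ^ (2 * b) = z * q + 1 := by
    have := Nat.pow_pos (n := 2 * b) hp.pos; omega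
  have hsum : p ^ (2 * b) * n = n + z * (n * q) := by rw [hpow]; ring
  have hdiv1 : (n + z * (n * q)) / z = n * q + n / z := by
    rw [Nat.add_mul_div_left _ _ hz, add_comm]
  have hdiv2 : z * (n * q) / z = n * q := Nat.mul_div_cancel_left _ hz
  have hAs : digitSum p A = digitSum p (n * q) := by
    obtain ⟨n', hn'⟩ := pow_padicValNat_dvd (p := p) (n := n)
    have hpv := Nat.pow_pos (n := padicValNat p n) hp.pos
    generalize padicValNat p n = v at *
    have : A = n' * q := by
      rw [hA, hq, hn', show p ^ v * n' * (z * q) = p ^ v * z * (n' * q) by ring,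
        Nat.mul_div_cancel_left _ (Nat.mul_pos hpv hz)]
    rw [this, hn', mul_assoc, digitSum_pow_mul hp1]
  -- Since `⌊p^a n/z⌋ = nq + ⌊n/z⌋`, the contributions of `ν_p(F_z)` cancel.
  have hval : padicValNat p (fibBinom (p ^ (2 * b) * n) n)
      = padicValNat p ((n * q + n / z).choose (n / z)) := by
    have e := fibProd_add_eq n (z * (n * q))
    have hB : fibBinom (n + z * (n * q)) n ≠ 0 := by
      intro h0
      rw [h0] at e
      exact fibProd_ne_zero _ (by simpa using e)
    have e1 := congrArg (padicValNat p) e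
    rw [padicValNat.mul (mul_ne_zero hB (fibProd_ne_zero _)) (fibProd_ne_zero _),
      padicValNat.mul hB (fibProd_ne_zero _), hleg, hleg, hleg, hdiv1, hdiv2] at e1
    have e2 := congrArg (padicValNat p) (Nat.add_choose_mul_factorial_mul_factorial (n * q) (n / z))
    have hC : (n * q + n / z).choose (n / z) ≠ 0 := (Nat.choose_pos (Nat.le_add_left _ _)).ne'
    rw [padicValNat.mul (mul_ne_zero hC (Nat.factorial_ne_zero _)) (Nat.factorial_ne_zero _),
      padicValNat.mul hC (Nat.factorial_ne_zero _)] at e2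
    rw [hsum]
    linarith
  have hB : fibBinom (p ^ (2 * b) * n) n ≠ 0 := by
    intro h0
    have e := fibProd_add_eq n (z * (n * q))
    rw [← hsum, h0] at e
    exact fibProd_ne_zero _ (by simpa using e)
  have hkum := sub_one_mul_padicValNat_choose_eq_sub_sum_digits' (p := p) (n := n * q) (k := n / z)
  change _ = digitSum p (n / z) + digitSum p (n * q) - digitSum p (n * q + n / z) at hkum
  rw [← hval, ← hdiv1, ← hsum, hdig] at hkum
  rw [hAs, dvd_iff_padicValNat_ne_zero hB, Nat.mul_div_cancel_left _ (by norm_num : 0 < 2)]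
  have hiff : padicValNat p (fibBinom (p ^ (2 * b) * n) n) ≠ 0 ↔
      0 < (p - 1) * padicValNat p (fibBinom (p ^ (2 * b) * n) n) := by
    rw [Nat.mul_pos_iff_of_pos_left (by omega), Nat.pos_iff_ne_zero]
  rw [hiff, hkum]
  omega
end

section
/- Let p be a prime with p ≠ 2 and p ≠ 5 satisfying p ≡ ±1 (mod 5), let n be a positive integer, and let A = n(p−1)/(p^{ν_p(n)}·z(p)) (which is an integer since z(p) divides p − 1). Then p divides C(pn, n)_F if and only if s_p(A) ≥ p − 1. -/
/-! ### Fibonomial coefficients and the rank of appearance -/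

/-- The product `F_1 F_2 ⋯ F_k`, the Fibonacci analogue of `k!`. -/
def fibFactorial (k : ℕ) : ℕ := ∏ i ∈ Finset.range k, Nat.fib (i + 1)

lemma fibFactorial_succ (k : ℕ) : fibFactorial (k + 1) = fibFactorial k * Nat.fib (k + 1) :=
  Finset.prod_range_succ _ _

/-- Any `k` consecutive Fibonacci numbers have product divisible by `F_1 ⋯ F_k`. The addition
formula `F_{a+k+2} = F_{a+1} F_k + F_{a+2} F_{k+1}` plays the role of Pascal's rule. -/
lemma fibFactorial_dvd_prod (k a : ℕ) :
    fibFactorial k ∣ ∏ i ∈ Finset.range k, Nat.fib (a + i + 1) := by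
  induction k generalizing a with
  | zero => simp [fibFactorial]
  | succ k ihk =>
    induction a with
    | zero => simp [fibFactorial]
    | succ a iha =>
      have h1 : ∏ i ∈ Finset.range (k + 1), Nat.fib (a + i + 1) =
          (∏ i ∈ Finset.range k, Nat.fib (a + 1 + i + 1)) * Nat.fib (a + 1) := by
        rw [Finset.prod_range_succ']
        congr 1
        exact Finset.prod_congr rfl fun i _ => by congr 1; ring
      have h2 : Nat.fib (a + 1 + k + 1) =
          Nat.fib (a + 1) * Nat.fib k + Nat.fib (a + 2) * Nat.fib (k + 1) := Nat.fib_add _ _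
      rw [Finset.prod_range_succ, h2, mul_add]
      refine dvd_add ?_ ?_
      · rw [← mul_assoc, ← h1]
        exact iha.mul_right _
      · rw [mul_comm (Nat.fib (a + 2)), ← mul_assoc, fibFactorial_succ]
        exact (Nat.mul_dvd_mul_right (ihk _) _).mul_right _

lemma fibBinom_mul_fibFactorial (a k : ℕ) :
    fibBinom (a + k) k * fibFactorial k * fibFactorial a = fibFactorial (a + k) := by
  have h : ∏ i ∈ Finset.range k, Nat.fib (a + k - i) =
      ∏ i ∈ Finset.range k, Nat.fib (a + i + 1) := by
    rw [← Finset.prod_range_reflect]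
    refine Finset.prod_congr rfl fun i hi => ?_
    have := Finset.mem_range.1 hi
    congr 1
    omega
  have h2 : fibBinom (a + k) k * fibFactorial k =
      ∏ i ∈ Finset.range k, Nat.fib (a + i + 1) := by
    rw [fibBinom, h]
    exact Nat.div_mul_cancel (fibFactorial_dvd_prod k a)
  rw [h2, mul_comm]
  exact (Finset.prod_range_add _ a k).symm

/-- If `p` has a rank of appearance at all, then it divides exactly the Fibonacci numbers whose
index is a multiple of it. -/
lemma fibRank_spec_s13 {p m : ℕ} (hm : 0 < m) (hpm : p ∣ Nat.fib m) :
    0 < fibRank p ∧ ∀ k, p ∣ Nat.fib k ↔ fibRank p ∣ k := by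
  have hmem : fibRank p ∈ {m : ℕ | 0 < m ∧ p ∣ Nat.fib m} := Nat.sInf_mem ⟨m, hm, hpm⟩
  refine ⟨hmem.1, fun k => ⟨fun h => ?_, fun h => hmem.2.trans (Nat.fib_dvd _ _ h)⟩⟩
  have hg : p ∣ Nat.fib (Nat.gcd (fibRank p) k) := by
    rw [Nat.fib_gcd]; exact Nat.dvd_gcd hmem.2 h
  have hle : fibRank p ≤ Nat.gcd (fibRank p) k :=
    Nat.sInf_le ⟨Nat.gcd_pos_of_pos_left _ hmem.1, hg⟩
  have := Nat.le_antisymm (Nat.gcd_le_left k hmem.1) hle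
  rw [← this]; exact Nat.gcd_dvd_right _ _

/-! ### The `p`-adic absolute value of Fibonacci numbers -/

section Padic

variable {p : ℕ} [hp : Fact p.Prime]

lemma isSquare_five (hp2 : p ≠ 2) (hmod : p % 5 = 1 ∨ p % 5 = 4) : IsSquare (5 : ZMod p) := by
  have : Fact (Nat.Prime 5) := ⟨by norm_num⟩
  have h := (ZMod.exists_sq_eq_prime_iff_of_mod_four_eq_one (p := 5) (q := p) (by norm_num) hp2).1
  have : IsSquare (p : ZMod 5) := by
    rw [← ZMod.natCast_mod]
    rcases hmod with h | h <;> rw [h]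
    · exact ⟨1, rfl⟩
    · exact ⟨2, rfl⟩
  exact_mod_cast h this

/-- `X ^ 2 - X - 1` has a root in `ℤ_[p]`: its roots modulo `p` are simple since the discriminant
`5` is a unit, so Hensel's lemma lifts one of them. -/
lemma exists_golden (hp2 : p ≠ 2) (hp5 : p ≠ 5) (hmod : p % 5 = 1 ∨ p % 5 = 4) :
    ∃ x : ℤ_[p], x ^ 2 = x + 1 := by
  obtain ⟨s, hs⟩ := isSquare_five hp2 hmod
  have h2 : (2 : ZMod p) ≠ 0 := by
    intro h
    have : ((2 : ℕ) : ZMod p) = 0 := by exact_mod_cast h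
    rw [ZMod.natCast_eq_zero_iff, Nat.prime_dvd_prime_iff_eq hp.out Nat.prime_two] at this
    exact hp2 this
  have h5 : ‖((5 : ℕ) : ℤ_[p])‖ = 1 := by
    rw [PadicInt.norm_natCast_eq_one_iff, Nat.coprime_primes hp.out (by norm_num)]
    exact hp5
  obtain ⟨a, ha⟩ := ZMod.ringHom_surjective (PadicInt.toZMod (p := p)) ((1 + s) / 2)
  have hroot : ‖a ^ 2 - a - 1‖ < 1 := by
    rw [← PadicInt.mem_nonunits, ← IsLocalRing.mem_maximalIdeal, ← PadicInt.ker_toZMod,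
      RingHom.mem_ker]
    simp only [map_sub, map_pow, map_one, ha]
    field_simp
    linear_combination -hs
  have hder : ‖2 * a - 1‖ = 1 := by
    -- `(2 a - 1) ^ 2` is congruent to the discriminant `5`
    have h1 : ‖(2 * a - 1) ^ 2‖ = 1 := by
      have e : (2 * a - 1) ^ 2 = ((5 : ℕ) : ℤ_[p]) + 4 * (a ^ 2 - a - 1) := by push_cast; ring
      have h4 : ‖4 * (a ^ 2 - a - 1)‖ < 1 := by
        rw [norm_mul]
        exact (mul_le_of_le_one_left (norm_nonneg _) (PadicInt.norm_le_one _)).trans_lt hroot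
      rw [e, PadicInt.norm_add_eq_max_of_ne (by rw [h5]; exact h4.ne'), h5, max_eq_left h4.le]
    rw [norm_pow] at h1
    exact (pow_eq_one_iff_of_nonneg (norm_nonneg _) two_ne_zero).1 h1
  have key := hensels_lemma (p := p) (R := ℤ_[p])
    (F := (Polynomial.X ^ 2 - Polynomial.X - 1)) (a := a)
    (by simpa [Polynomial.derivative_X_pow, hder, one_add_one_eq_two] using hroot)
  obtain ⟨x, hx, -⟩ := key
  refine ⟨x, ?_⟩
  simp at hx
  linear_combination hx

/-- Lifting the exponent in `ℤ_[p]`, phrased through the absolute value. -/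
lemma norm_pow_sub_pow (hp2 : p ≠ 2) {x y : ℤ_[p]} (hxy : (p : ℤ_[p]) ∣ x - y)
    (hx : ¬ (p : ℤ_[p]) ∣ x) (j : ℕ) : ‖x ^ j - y ^ j‖ = ‖x - y‖ * ‖(j : ℤ_[p])‖ := by
  have hprime : Prime (p : ℤ_[p]) := PadicInt.prime_p
  induction j using Nat.strong_induction_on generalizing x y with
  | _ j ih =>
  rcases Nat.eq_zero_or_pos j with rfl | hj
  · simp
  by_cases hpj : p ∣ j
  · obtain ⟨i, rfl⟩ := hpj
    have hi : i < p * i := by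
      have := hp.out.two_le
      have : 0 < i := Nat.pos_of_mul_pos_left hj
      nlinarith
    have hxy' : (p : ℤ_[p]) ∣ x ^ p - y ^ p := hxy.trans (sub_dvd_pow_sub_pow _ _ _)
    rw [pow_mul, pow_mul, ih i hi hxy' fun h => hx (hprime.dvd_of_dvd_pow h), Nat.cast_mul,
      norm_mul, ← mul_assoc]
    congr 1
    have hgs := emultiplicity_geom_sum₂_eq_one hprime (hp.out.odd_of_ne_two hp2) hxy hx
    replace hgs := emultiplicity_eq_coe.1 (hgs.trans Nat.cast_one.symm)
    rw [pow_one] at hgs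
    obtain ⟨⟨u, hu⟩, hnd⟩ := hgs
    -- the geometric sum is `p` times a unit
    have hu1 : ‖u‖ = 1 := by
      by_contra hne
      have : ‖u‖ < 1 := lt_of_le_of_ne (PadicInt.norm_le_one u) hne
      obtain ⟨v, rfl⟩ := (PadicInt.norm_lt_one_iff_dvd u).1 this
      exact hnd ⟨v, by rw [hu]; ring⟩
    rw [← geom_sum₂_mul, hu, norm_mul, norm_mul, hu1]
    ring
  · have hpj' : ¬ (p : ℤ_[p]) ∣ (j : ℤ_[p]) := by
      rwa [← PadicInt.norm_lt_one_iff_dvd, PadicInt.norm_natCast_lt_one_iff]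
    have h1 := not_dvd_geom_sum₂ hprime hxy hx hpj'
    have h2 : ‖(j : ℤ_[p])‖ = 1 :=
      PadicInt.norm_natCast_eq_one_iff.2 ((hp.out.coprime_iff_not_dvd).2 hpj)
    rw [← PadicInt.norm_lt_one_iff_dvd] at h1
    rw [← geom_sum₂_mul, norm_mul, h2, le_antisymm (PadicInt.norm_le_one _) (not_lt.1 h1)]
    ring

lemma golden_pow_succ {R : Type*} [CommRing R] {x : R} (hx : x ^ 2 = x + 1) (m : ℕ) :
    x ^ (m + 1) = Nat.fib (m + 1) * x + Nat.fib m := by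
  induction m with
  | zero => simp
  | succ m ih =>
    rw [pow_succ, ih, Nat.fib_add_two]
    push_cast
    linear_combination (Nat.fib (m + 1) : R) * hx

/-- Binet's formula, with the denominator cleared; the conjugate root is `1 - x`. -/
lemma binet {R : Type*} [CommRing R] {x : R} (hx : x ^ 2 = x + 1) (m : ℕ) :
    x ^ m - (1 - x) ^ m = (2 * x - 1) * Nat.fib m := by
  cases m with
  | zero => simp
  | succ m =>
    have hy : (1 - x) ^ 2 = (1 - x) + 1 := by linear_combination hx
    rw [golden_pow_succ hx, golden_pow_succ hy]
    ring

lemma norm_golden {x : ℤ_[p]} (hx : x ^ 2 = x + 1) : ‖x‖ = 1 := by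
  refine PadicInt.isUnit_iff.1 (IsUnit.of_mul_eq_one (x - 1) ?_)
  linear_combination hx

lemma norm_golden_sub (hp5 : p ≠ 5) {x : ℤ_[p]} (hx : x ^ 2 = x + 1) : ‖2 * x - 1‖ = 1 := by
  have h5 : ‖((5 : ℕ) : ℤ_[p])‖ = 1 := by
    rw [PadicInt.norm_natCast_eq_one_iff, Nat.coprime_primes hp.out (by norm_num)]
    exact hp5
  have e : (2 * x - 1) ^ 2 = ((5 : ℕ) : ℤ_[p]) := by push_cast; linear_combination 4 * hx
  rw [← e, norm_pow] at h5
  exact (pow_eq_one_iff_of_nonneg (norm_nonneg _) two_ne_zero).1 h5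

lemma prime_dvd_fib_sub_one (hp5 : p ≠ 5) {x : ℤ_[p]} (hx : x ^ 2 = x + 1) :
    p ∣ Nat.fib (p - 1) := by
  have hne : ∀ u : ℤ_[p], ‖u‖ = 1 → PadicInt.toZMod u ≠ 0 := fun u hu =>
    ((PadicInt.isUnit_iff.2 hu).map PadicInt.toZMod).ne_zero
  have hy : (1 - x) ^ 2 = (1 - x) + 1 := by linear_combination hx
  have h := congrArg PadicInt.toZMod (binet hx (p - 1))
  simp only [map_sub (PadicInt.toZMod) (x ^ _), map_pow, map_mul, map_natCast] at h
  rw [ZMod.pow_card_sub_one_eq_one (hne _ (norm_golden hx)),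
    ZMod.pow_card_sub_one_eq_one (hne _ (norm_golden hy)), sub_self] at h
  rw [← ZMod.natCast_eq_zero_iff]
  exact (mul_eq_zero.1 h.symm).resolve_left (hne _ (norm_golden_sub hp5 hx))

/-- The `p`-part of `F_{zj}` is the `p`-part of `F_z` times that of `j`, as soon as `p ∣ F_z`. -/
lemma norm_fib_mul (hp2 : p ≠ 2) (hp5 : p ≠ 5) {x : ℤ_[p]} (hx : x ^ 2 = x + 1) {z : ℕ}
    (hz : p ∣ Nat.fib z) (j : ℕ) :
    ‖(Nat.fib (z * j) : ℤ_[p])‖ = ‖(Nat.fib z : ℤ_[p])‖ * ‖(j : ℤ_[p])‖ := by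
  have hb : ∀ m, ‖(Nat.fib m : ℤ_[p])‖ = ‖x ^ m - (1 - x) ^ m‖ := fun m => by
    rw [binet hx, norm_mul, norm_golden_sub hp5 hx, one_mul]
  rw [hb, hb, pow_mul, pow_mul]
  refine norm_pow_sub_pow hp2 ?_ ?_ j
  · rwa [← PadicInt.norm_lt_one_iff_dvd, ← hb, PadicInt.norm_natCast_lt_one_iff]
  · rw [← PadicInt.norm_lt_one_iff_dvd, norm_pow, norm_golden hx]
    simp

lemma norm_fibFactorial (hp2 : p ≠ 2) (hp5 : p ≠ 5) {x : ℤ_[p]} (hx : x ^ 2 = x + 1) {z : ℕ}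
    (hz : ∀ k, p ∣ Nat.fib k ↔ z ∣ k) (k : ℕ) :
    ‖(fibFactorial k : ℤ_[p])‖ =
      ‖(Nat.fib z : ℤ_[p])‖ ^ (k / z) * ‖((k / z).factorial : ℤ_[p])‖ := by
  induction k with
  | zero => simp [fibFactorial]
  | succ k ih =>
    rw [fibFactorial_succ, Nat.cast_mul, norm_mul, ih, Nat.succ_div]
    split_ifs with h
    · have e : k + 1 = z * (k / z + 1) := by
        have := Nat.mul_div_cancel' h
        rwa [Nat.succ_div, if_pos h, eq_comm] at this
      rw [e, norm_fib_mul hp2 hp5 hx ((hz z).2 dvd_rfl), Nat.factorial_succ]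
      push_cast
      rw [norm_mul]
      ring
    · have : ‖(Nat.fib (k + 1) : ℤ_[p])‖ = 1 := by
        rw [PadicInt.norm_natCast_eq_one_iff, hp.out.coprime_iff_not_dvd, hz]
        exact h
      rw [this, add_zero, mul_one]

/-- When `z = z(p)` divides `a`, no factor `F_z` is lost to carries in `a + n`, and the Fibonomial
coefficient has the same `p`-part as an ordinary binomial coefficient. -/
lemma dvd_fibBinom_iff (hp2 : p ≠ 2) (hp5 : p ≠ 5) {x : ℤ_[p]} (hx : x ^ 2 = x + 1) {z : ℕ}
    (hz0 : 0 < z) (hz : ∀ k, p ∣ Nat.fib k ↔ z ∣ k) (b n : ℕ) :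
    p ∣ fibBinom (z * b + n) n ↔ p ∣ (b + n / z).choose (n / z) := by
  have h1 := congrArg (fun t : ℕ => ‖(t : ℤ_[p])‖) (fibBinom_mul_fibFactorial (z * b) n)
  have h2 := congrArg (fun t : ℕ => ‖(t : ℤ_[p])‖) (Nat.add_choose_mul_factorial_mul_factorial b (n / z))
  simp only [Nat.cast_mul, norm_mul, norm_fibFactorial hp2 hp5 hx hz,
    Nat.mul_add_div hz0, Nat.mul_div_cancel_left _ hz0] at h1 h2
  have hF : ‖(Nat.fib z : ℤ_[p])‖ ≠ 0 := by
    rw [norm_ne_zero_iff]; exact_mod_cast (Nat.fib_pos.2 hz0).ne'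
  have hf : ∀ m : ℕ, ‖(m.factorial : ℤ_[p])‖ ≠ 0 := fun m => by
    rw [norm_ne_zero_iff]; exact_mod_cast m.factorial_ne_zero
  have h3 : ‖(fibBinom (z * b + n) n : ℤ_[p])‖ = ‖((b + n / z).choose (n / z) : ℤ_[p])‖ := by
    refine mul_right_cancel₀ (mul_ne_zero (mul_ne_zero (pow_ne_zero (b + n / z) hF) (hf (n / z)))
      (hf b)) ?_
    rw [pow_add] at h1 ⊢
    linear_combination h1 - ‖(Nat.fib z : ℤ_[p])‖ ^ b * ‖(Nat.fib z : ℤ_[p])‖ ^ (n / z) * h2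
  rw [← PadicInt.norm_natCast_lt_one_iff, h3, PadicInt.norm_natCast_lt_one_iff]

end Padic

/-! ### Digit sums and Lucas' theorem -/

lemma digitSum_add_mul_s13 {p : ℕ} (hp : 1 < p) {c : ℕ} (hc : c < p) (m : ℕ) :
    digitSum p (c + p * m) = c + digitSum p m := by
  by_cases h : c ≠ 0 ∨ m ≠ 0
  · simp [digitSum, Nat.digits_add p hp c m hc h]
  · push Not at h
    simp [digitSum, h.1, h.2]

/-- The base-`p` digit sum of `(p - 1) a + r`, with `r` a digit, is minimal (equal to `r`) exactly
when `C(pa + r, a)` is prime to `p`. Induction on the number of digits of `a`: with `c = a % p`,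
Lucas' theorem strips the last digit of both binomial arguments, and if `c ≤ r` then the last digit
of `(p - 1) a + r = p ((p - 1) (a / p) + c) + (r - c)` is `r - c`. If `c > r` the last digit is
`p + r - c > r`. -/
lemma prime_dvd_choose_iff {p : ℕ} (hp : p.Prime) (a r : ℕ) (hr : r < p) :
    p ∣ (p * a + r).choose a ↔ digitSum p ((p - 1) * a + r) ≠ r := by
  have : Fact p.Prime := ⟨hp⟩
  induction a using Nat.strong_induction_on generalizing r with
  | _ a ih =>
  rcases Nat.eq_zero_or_pos a with rfl | ha
  · have := digitSum_add_mul_s13 hp.one_lt hr 0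
    simp only [mul_zero, add_zero] at this
    rw [mul_zero, mul_zero, zero_add, this]
    simp [hp.ne_one, digitSum]
  have hc : a % p < p := Nat.mod_lt _ hp.pos
  have hq := Nat.mod_add_div a p
  have hlucas := Choose.choose_modEq_choose_mod_mul_choose_div_nat (p := p) (n := p * a + r)
    (k := a)
  rw [Nat.mul_add_mod, Nat.mod_eq_of_lt hr, Nat.mul_add_div hp.pos, Nat.div_eq_of_lt hr,
    add_zero] at hlucas
  rw [hlucas.dvd_iff dvd_rfl, hp.dvd_mul]
  obtain ⟨t, rfl⟩ : ∃ t, p = t + 1 := ⟨p - 1, (Nat.succ_pred_prime hp).symm⟩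
  rw [Nat.add_sub_cancel] at ih ⊢
  set c := a % (t + 1)
  set q := a / (t + 1)
  rcases le_or_gt c r with hcr | hcr
  · have h1 : ¬ (t + 1) ∣ r.choose c := fun h => by
      have h2 : r.choose c ∣ r.factorial :=
        ⟨_, (Nat.choose_mul_factorial_mul_factorial hcr).symm.trans (mul_assoc _ _ _)⟩
      exact absurd ((hp.dvd_factorial).1 (h.trans h2)) (by omega)
    have e : t * a + r = (r - c) + (t + 1) * (t * q + c) := by
      obtain ⟨d, rfl⟩ := Nat.exists_eq_add_of_le hcr
      rw [Nat.add_sub_cancel_left, ← hq]; ring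
    rw [e, digitSum_add_mul_s13 hp.one_lt (by omega), or_iff_right h1]
    have := ih q (Nat.div_lt_self ha hp.one_lt) c hc
    rw [show (t + 1) * q + c = a by rw [add_comm]; exact hq] at this
    refine this.trans ?_
    omega
  · have h1 : r.choose c = 0 := Nat.choose_eq_zero_of_lt hcr
    have e : ∃ m, t * a + r = (t + 1 + r - c) + (t + 1) * m := by
      have : 0 < t * q + c := by omega
      refine ⟨t * q + c - 1, ?_⟩
      obtain ⟨d, hd⟩ := Nat.exists_eq_add_of_lt hcr
      obtain ⟨m, hm⟩ : ∃ m, t * q + c = m + 1 := ⟨t * q + c - 1, by omega⟩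
      rw [hm, Nat.add_sub_cancel]
      have : t * a + c = (t + 1) * (m + 1) := by
        rw [← hm, ← hq]; ring
      have h3 : (t + 1) * (m + 1) = (t + 1) * m + (t + 1) := by ring
      omega
    obtain ⟨m, e⟩ := e
    rw [e, digitSum_add_mul_s13 hp.one_lt (by omega), h1]
    simp only [dvd_zero, true_or, true_iff]
    omega

theorem prime_dvd_fibonomial_iff_pm_one
    (p n : ℕ) (hp : p.Prime) (hp2 : p ≠ 2) (hp5 : p ≠ 5)
    (hn : 0 < n)
    (hmod : p % 5 = 1 ∨ p % 5 = 4)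
    (A : ℕ)
    (hA : A = n * (p - 1) / (p ^ padicValNat p n * fibRank p)) :
    p ∣ fibBinom (p * n) n ↔ p - 1 ≤ digitSum p A := by
  have : Fact p.Prime := ⟨hp⟩
  have hp3 : 2 < p := lt_of_le_of_ne hp.two_le (Ne.symm hp2)
  obtain ⟨x, hx⟩ := exists_golden hp2 hp5 hmod
  have hfib := prime_dvd_fib_sub_one hp5 hx
  obtain ⟨hz0, hz⟩ := fibRank_spec_s13 (by omega) hfib
  obtain ⟨d, hd⟩ := (hz _).1 hfib
  set z := fibRank p
  obtain ⟨m, hm⟩ : p ^ padicValNat p n ∣ n := pow_padicValNat_dvd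
  set v := padicValNat p n
  have hd0 : 0 < d := Nat.pos_of_ne_zero fun h => by rw [h] at hd; omega
  have hm0 : 0 < m := Nat.pos_of_ne_zero fun h => by rw [h] at hm; omega
  have hA' : A = m * d := by
    rw [hA, hd, hm, show p ^ v * m * (z * d) = m * d * (p ^ v * z) by ring]
    exact Nat.mul_div_cancel _ (Nat.mul_pos (Nat.pow_pos hp.pos) hz0)
  have hB : digitSum p (n * d) = digitSum p A := by
    have e : n * d = p ^ v * A := by rw [hA', ← mul_assoc, ← hm]
    rw [e, digitSum, Nat.digits_base_pow_mul hp.one_lt (by rw [hA']; positivity)]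
    simp [digitSum]
  have hpn : p * n = z * (n * d) + n := by
    have : p = z * d + 1 := by omega
    calc p * n = (z * d + 1) * n := by rw [← this]
      _ = _ := by ring
  rw [hpn, dvd_fibBinom_iff hp2 hp5 hx hz0 hz, ← hB]
  -- Division of `n d` by `p - 1 = z d` has quotient `n / z`.
  have hq : n / z = n * d / (p - 1) := by rw [hd, Nat.mul_div_mul_right _ _ hd0]
  have hr : n * d % (p - 1) < p - 1 := Nat.mod_lt _ (by omega)
  have hdiv := Nat.div_add_mod (n * d) (p - 1)
  rw [← hq] at hdiv
  set r := n * d % (p - 1) with hrdef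
  have hsum : n * d + n / z = p * (n / z) + r := by
    obtain ⟨t, rfl⟩ : ∃ t, p = t + 1 := ⟨p - 1, by omega⟩
    rw [Nat.add_sub_cancel] at hdiv
    rw [add_one_mul]
    omega
  rw [hsum, prime_dvd_choose_iff hp _ _ (by omega), hdiv]
  have hcong := Nat.modEq_digits_sum (p - 1) p
    (by rw [show p = (p - 1) + 1 by omega, Nat.add_sub_cancel, Nat.add_mod_left,
          Nat.mod_eq_of_lt (by omega)]) (n * d)
  change n * d % (p - 1) = digitSum p (n * d) % (p - 1) at hcong
  rw [← hrdef] at hcong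
  constructor
  · intro h
    by_contra hlt
    rw [Nat.mod_eq_of_lt (by omega)] at hcong
    exact h hcong.symm
  · intro h; omega
end

section
/- Let p be a prime, let a ≥ 0, ℓ ≥ 0, and m ≥ 1 be integers, assume p ≡ ±1 (mod m), and let δ = [ℓ ≢ 0 (mod m)]. Then: (1) if p ≡ 1 (mod m), ν_p(⌊ℓp^a/m⌋!) = ℓ(p^a − 1)/(m(p−1)) − a·{ℓ/m} + ν_p(⌊ℓ/m⌋!); (2) if p ≡ −1 (mod m) and a is even, ν_p(⌊ℓp^a/m⌋!) = ℓ(p^a − 1)/(m(p−1)) − (a/2)·δ + ν_p(⌊ℓ/m⌋!); (3) if p ≡ −1 (mod m) and a is odd, ν_p(⌊ℓp^a/m⌋!) = ℓ(p^a − 1)/(m(p−1)) − ((a−1)/2)·δ − {ℓ/m} + ν_p(⌊ℓ/m⌋!). -/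
lemma padicValNat_floor_succ {p : ℕ} (hp : p.Prime) (a ℓ m : ℕ) :
    padicValNat p (Nat.factorial (ℓ * p ^ (a + 1) / m))
      = ℓ * p ^ a / m + padicValNat p (Nat.factorial (ℓ * p ^ a / m)) := by
  have := Fact.mk hp
  have h : ℓ * p ^ (a + 1) / m / p = ℓ * p ^ a / m := by
    rw [Nat.div_div_eq_div_mul, pow_succ, ← mul_assoc, Nat.mul_div_mul_right _ _ hp.pos]
  rw [← padicValNat_mul_div_factorial, padicValNat_factorial_mul, h, add_comm]

lemma natCast_div_eq_sub_fract (n m : ℕ) :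
    ((n / m : ℕ) : ℚ) = (n : ℚ) / m - Int.fract ((n : ℚ) / m) := by
  rw [Int.self_sub_fract, Rat.floor_natCast_div_natCast]
  norm_cast

/-- The common form of the three formulas, valid without any congruence on `p`. -/
lemma padicValNat_floor_eq_sub_sum_fract {p : ℕ} (hp : p.Prime) (a ℓ : ℕ) {m : ℕ} (hm : 1 ≤ m) :
    (padicValNat p (Nat.factorial (ℓ * p ^ a / m)) : ℚ)
      = (ℓ : ℚ) * (p ^ a - 1) / (m * (p - 1))
        - ∑ i ∈ Finset.range a, Int.fract (((ℓ * p ^ i : ℕ) : ℚ) / m)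
        + padicValNat p (Nat.factorial (ℓ / m)) := by
  have hp1 : (p : ℚ) - 1 ≠ 0 := sub_ne_zero.mpr (by exact_mod_cast hp.one_lt.ne')
  have hm0 : (m : ℚ) ≠ 0 := by positivity
  induction a with
  | zero => simp
  | succ a ih =>
    rw [padicValNat_floor_succ hp, Nat.cast_add, ih, natCast_div_eq_sub_fract,
      Finset.sum_range_succ]
    generalize Int.fract (((ℓ * p ^ a : ℕ) : ℚ) / m) = f
    push_cast
    field_simp
    ring

lemma fract_div_eq_of_modEq {x y : ℤ} {m : ℕ} (hm : 1 ≤ m) (h : x ≡ y [ZMOD (m : ℤ)]) :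
    Int.fract ((x : ℚ) / m) = Int.fract ((y : ℚ) / m) := by
  have hm0 : (m : ℚ) ≠ 0 := by positivity
  obtain ⟨k, hk⟩ := h.symm.dvd
  refine Int.fract_eq_fract.mpr ⟨k, ?_⟩
  have hk' : (x : ℚ) - y = m * k := by exact_mod_cast hk
  rw [← sub_div, hk', mul_div_cancel_left₀ _ hm0]

lemma fract_add_fract_neg (ℓ : ℕ) {m : ℕ} (hm : 1 ≤ m) :
    Int.fract ((ℓ : ℚ) / m) + Int.fract (-((ℓ : ℚ) / m)) = if ¬ m ∣ ℓ then 1 else 0 := by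
  have hm0 : (m : ℚ) ≠ 0 := by positivity
  by_cases h : m ∣ ℓ
  · obtain ⟨k, rfl⟩ := h
    rw [Nat.cast_mul, mul_div_cancel_left₀ _ hm0]
    simp
  · have hf : Int.fract ((ℓ : ℚ) / m) ≠ 0 := by
      intro h0
      have h1 := natCast_div_eq_sub_fract ℓ m
      rw [h0, sub_zero, eq_div_iff hm0] at h1
      exact h ⟨ℓ / m, by rw [mul_comm]; exact_mod_cast h1.symm⟩
    rw [Int.fract_neg hf, if_pos h]
    ring

lemma sum_fract_of_modEq_one {p m : ℕ} (hm : 1 ≤ m) (h : (p : ℤ) ≡ 1 [ZMOD (m : ℤ)]) (a ℓ : ℕ) :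
    ∑ i ∈ Finset.range a, Int.fract (((ℓ * p ^ i : ℕ) : ℚ) / m) = a * Int.fract ((ℓ : ℚ) / m) := by
  rw [Finset.sum_congr rfl (g := fun _ => Int.fract ((ℓ : ℚ) / m)), Finset.sum_const,
    Finset.card_range, nsmul_eq_mul]
  intro i _
  have := fract_div_eq_of_modEq hm ((h.pow i).mul_left (ℓ : ℤ))
  simpa using this

lemma fract_even_pow {p m : ℕ} (hm : 1 ≤ m) (h : (p : ℤ) ≡ -1 [ZMOD (m : ℤ)]) (k ℓ : ℕ) :
    Int.fract (((ℓ * p ^ (2 * k) : ℕ) : ℚ) / m) = Int.fract ((ℓ : ℚ) / m) := by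
  have := fract_div_eq_of_modEq hm ((h.pow (2 * k)).mul_left (ℓ : ℤ))
  simpa [pow_mul] using this

lemma fract_odd_pow {p m : ℕ} (hm : 1 ≤ m) (h : (p : ℤ) ≡ -1 [ZMOD (m : ℤ)]) (k ℓ : ℕ) :
    Int.fract (((ℓ * p ^ (2 * k + 1) : ℕ) : ℚ) / m) = Int.fract (-((ℓ : ℚ) / m)) := by
  have := fract_div_eq_of_modEq hm ((h.pow (2 * k + 1)).mul_left (ℓ : ℤ))
  simpa [pow_succ, pow_mul, neg_div] using this

lemma sum_fract_of_modEq_neg_one {p m : ℕ} (hm : 1 ≤ m) (h : (p : ℤ) ≡ -1 [ZMOD (m : ℤ)])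
    (k ℓ : ℕ) :
    ∑ i ∈ Finset.range (2 * k), Int.fract (((ℓ * p ^ i : ℕ) : ℚ) / m)
      = k * (if ¬ m ∣ ℓ then 1 else 0) := by
  induction k with
  | zero => simp
  | succ k ih =>
    rw [show 2 * (k + 1) = 2 * k + 1 + 1 by ring, Finset.sum_range_succ, Finset.sum_range_succ,
      ih, fract_even_pow hm h, fract_odd_pow hm h, add_assoc, fract_add_fract_neg ℓ hm]
    push_cast
    ring

theorem padicValNat_floor_mul_pow_factorial
    (p a ℓ m : ℕ) (hp : p.Prime) (hm : 1 ≤ m)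
    (hpm : (p : ℤ) ≡ 1 [ZMOD (m : ℤ)] ∨ (p : ℤ) ≡ -1 [ZMOD (m : ℤ)])
    (δ : ℕ) (hδ : δ = if ¬ m ∣ ℓ then 1 else 0) :
    ((p : ℤ) ≡ 1 [ZMOD (m : ℤ)] →
      (padicValNat p (Nat.factorial (ℓ * p ^ a / m)) : ℚ)
        = (ℓ : ℚ) * (p ^ a - 1) / (m * (p - 1))
          - a * Int.fract ((ℓ : ℚ) / m)
          + padicValNat p (Nat.factorial (ℓ / m))) ∧
    ((p : ℤ) ≡ -1 [ZMOD (m : ℤ)] → Even a →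
      (padicValNat p (Nat.factorial (ℓ * p ^ a / m)) : ℚ)
        = (ℓ : ℚ) * (p ^ a - 1) / (m * (p - 1))
          - ((a : ℚ) / 2) * δ
          + padicValNat p (Nat.factorial (ℓ / m))) ∧
    ((p : ℤ) ≡ -1 [ZMOD (m : ℤ)] → Odd a →
      (padicValNat p (Nat.factorial (ℓ * p ^ a / m)) : ℚ)
        = (ℓ : ℚ) * (p ^ a - 1) / (m * (p - 1))
          - (((a : ℚ) - 1) / 2) * δ
          - Int.fract ((ℓ : ℚ) / m)
          + padicValNat p (Nat.factorial (ℓ / m))) := by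
  have hδ' : (δ : ℚ) = if ¬ m ∣ ℓ then 1 else 0 := by rw [hδ]; push_cast; rfl
  refine ⟨fun h => ?_, fun h ha => ?_, fun h ha => ?_⟩
  · rw [padicValNat_floor_eq_sub_sum_fract hp a ℓ hm, sum_fract_of_modEq_one hm h]
  · obtain ⟨k, rfl⟩ := even_iff_exists_two_mul.mp ha
    rw [padicValNat_floor_eq_sub_sum_fract hp _ ℓ hm, sum_fract_of_modEq_neg_one hm h, ← hδ']
    push_cast
    ring
  · obtain ⟨k, rfl⟩ := ha
    rw [padicValNat_floor_eq_sub_sum_fract hp _ ℓ hm, Finset.sum_range_succ,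
      sum_fract_of_modEq_neg_one hm h, fract_even_pow hm h, ← hδ']
    push_cast
    ring
end

section
/- Let 0 ≤ k ≤ m be integers, let A_2 = ν_2(⌊m/6⌋!) − ν_2(⌊k/6⌋!) − ν_2(⌊(m−k)/6⌋!), and let r = m mod 6 and s = k mod 6. Then ν_2( C(m,k)_F ) = A_2 if r ≥ s and (r,s) ∉ {(3,1),(3,2),(4,2)}; ν_2( C(m,k)_F ) = A_2 + 1 if (r,s) ∈ {(3,1),(3,2),(4,2)}; ν_2( C(m,k)_F ) = A_2 + 3 if r < s and (r,s) ∉ {(0,3),(1,3),(2,3),(1,4),(2,4),(2,5)}; and ν_2( C(m,k)_F ) = A_2 + 2 if (r,s) ∈ {(0,3),(1,3),(2,3),(1,4),(2,4),(2,5)}. -/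
/-- The fibonorial `F_1 F_2 ⋯ F_n`. -/
def fibonorial (n : ℕ) : ℕ := ∏ i ∈ Finset.range n, Nat.fib (i + 1)

lemma fibonorial_succ (n : ℕ) : fibonorial (n + 1) = fibonorial n * Nat.fib (n + 1) :=
  Finset.prod_range_succ _ _

lemma fibonorial_ne_zero (n : ℕ) : fibonorial n ≠ 0 := by
  simp [fibonorial, Finset.prod_eq_zero_iff]

/-- Integrality of the Fibonomial coefficients, by the Pascal-type recurrence that comes from
`F_{a+b+2} = F_{a+1} F_b + F_{a+2} F_{b+1}`. -/
lemma fibonorial_mul_dvd (a b : ℕ) :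
    fibonorial a * fibonorial b ∣ fibonorial (a + b) := by
  induction hn : a + b generalizing a b with
  | zero =>
    obtain ⟨rfl, rfl⟩ : a = 0 ∧ b = 0 := by omega
    simp [fibonorial]
  | succ n ih =>
    rcases a with _ | a
    · obtain rfl : b = n + 1 := by omega
      simp [fibonorial]
    rcases b with _ | b
    · obtain rfl : a = n := by omega
      simp [fibonorial]
    have hfib : Nat.fib (n + 1)
        = Nat.fib (a + 1) * Nat.fib b + Nat.fib (a + 2) * Nat.fib (b + 1) := by
      rw [← Nat.fib_add]
      congr 1
      omega
    have h1 := ih (a + 1) b (by omega)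
    have h2 := ih a (b + 1) (by omega)
    rw [fibonorial_succ n, hfib, mul_add]
    refine dvd_add ?_ ?_
    · calc fibonorial (a + 1) * fibonorial (b + 1)
          = fibonorial a * fibonorial (b + 1) * Nat.fib (a + 1) := by rw [fibonorial_succ a]; ring
        _ ∣ fibonorial n * (Nat.fib (a + 1) * Nat.fib b) :=
          mul_dvd_mul h2 (dvd_mul_right _ _)
    · calc fibonorial (a + 1) * fibonorial (b + 1)
          = fibonorial (a + 1) * fibonorial b * Nat.fib (b + 1) := by rw [fibonorial_succ b]; ring
        _ ∣ fibonorial n * (Nat.fib (a + 2) * Nat.fib (b + 1)) :=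
          mul_dvd_mul h1 (dvd_mul_left _ _)

lemma prod_fib_sub_mul_fibonorial (d k : ℕ) :
    (∏ i ∈ Finset.range k, Nat.fib (d + k - i)) * fibonorial d = fibonorial (d + k) := by
  induction k with
  | zero => simp
  | succ k ih =>
    rw [Finset.prod_range_succ', ← add_assoc, fibonorial_succ, ← ih]
    simp only [Nat.add_sub_add_right, Nat.sub_zero]
    ring

lemma fibBinom_mul_fibonorial (d k : ℕ) :
    fibBinom (d + k) k * fibonorial k * fibonorial d = fibonorial (d + k) := by
  have h := prod_fib_sub_mul_fibonorial d k
  have hdvd : fibonorial k ∣ ∏ i ∈ Finset.range k, Nat.fib (d + k - i) := by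
    refine Nat.dvd_of_mul_dvd_mul_right (Nat.pos_of_ne_zero (fibonorial_ne_zero d)) ?_
    rw [h, add_comm d k]
    exact fibonorial_mul_dvd k d
  have hdiv : fibBinom (d + k) k * fibonorial k = ∏ i ∈ Finset.range k, Nat.fib (d + k - i) :=
    Nat.div_mul_cancel hdvd
  rw [hdiv, h]

lemma padicValNat_two_eq_of_mod {x e : ℕ} (h : x % 2 ^ (e + 1) = 2 ^ e) :
    padicValNat 2 x = e := by
  have hx : x = 2 ^ e * (2 * (x / 2 ^ (e + 1)) + 1) := by
    conv_lhs => rw [← Nat.div_add_mod x (2 ^ (e + 1)), h]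
    ring
  rw [hx, padicValNat.mul (by positivity) (by omega), padicValNat.prime_pow,
    padicValNat.eq_zero_of_not_dvd (by omega), add_zero]

/-- The Fibonacci sequence has period `6` modulo `4`. -/
lemma fib_six_mul_add_mod_four (q t : ℕ) : Nat.fib (6 * q + t) % 4 = Nat.fib t % 4 := by
  induction q with
  | zero => simp
  | succ q ih =>
    have h : Nat.fib (6 * q + t + 6)
        = Nat.fib (6 * q + t) * 5 + Nat.fib (6 * q + t + 1) * 8 := Nat.fib_add (6 * q + t) 5
    rw [show 6 * (q + 1) + t = 6 * q + t + 6 by ring]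
    omega

lemma fib_twelve_mul_add_six_mod (j : ℕ) : Nat.fib (12 * j + 6) % 16 = 8 := by
  induction j with
  | zero => norm_num
  | succ j ih =>
    have h : Nat.fib (12 * j + 18)
        = Nat.fib (12 * j + 6) * 89 + Nat.fib (12 * j + 6 + 1) * 144 :=
      Nat.fib_add (12 * j + 6) 11
    rw [show 12 * (j + 1) + 6 = 12 * j + 18 by ring]
    omega

lemma padicValNat_fib_six_mul (n : ℕ) (hn : 0 < n) :
    padicValNat 2 (Nat.fib (6 * n)) = padicValNat 2 n + 3 := by
  induction n using Nat.strong_induction_on with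
  | _ n ih =>
    obtain ⟨j, rfl | rfl⟩ := Nat.even_or_odd' n
    · have h0 := fib_six_mul_add_mod_four j 0
      have h1 := fib_six_mul_add_mod_four j 1
      norm_num at h0 h1
      have hle : Nat.fib (6 * j) ≤ Nat.fib (6 * j + 1) := Nat.fib_le_fib_succ
      have hL : padicValNat 2 (2 * Nat.fib (6 * j + 1) - Nat.fib (6 * j)) = 1 :=
        padicValNat_two_eq_of_mod (by norm_num; omega)
      have hF : Nat.fib (6 * j) ≠ 0 := by
        rw [Ne, Nat.fib_eq_zero]
        omega
      rw [show 6 * (2 * j) = 2 * (6 * j) by ring, Nat.fib_two_mul,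
        padicValNat.mul hF (by omega), hL, ih j (by omega) (by omega),
        padicValNat.mul (by norm_num) (by omega), padicValNat.self (by norm_num)]
      ring
    · rw [padicValNat.eq_zero_of_not_dvd (show ¬ 2 ∣ 2 * j + 1 by omega), zero_add,
        show 6 * (2 * j + 1) = 12 * j + 6 by ring]
      exact padicValNat_two_eq_of_mod (fib_twelve_mul_add_six_mod j)

lemma padicValNat_fibonorial (n : ℕ) :
    padicValNat 2 (fibonorial n) = padicValNat 2 (n / 6).factorial + 3 * (n / 6) + (n + 3) / 6 := by
  induction n with
  | zero => simp [fibonorial]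
  | succ n ih =>
    have hF : Nat.fib (n + 1) ≠ 0 := by simp
    rw [fibonorial_succ, padicValNat.mul (fibonorial_ne_zero n) hF, ih]
    have hmod := fib_six_mul_add_mod_four ((n + 1) / 6) ((n + 1) % 6)
    rw [Nat.div_add_mod] at hmod
    obtain h | h | h : (n + 1) % 6 = 0 ∨ (n + 1) % 6 = 3 ∨
        ((n + 1) % 6 = 1 ∨ (n + 1) % 6 = 2 ∨ (n + 1) % 6 = 4 ∨ (n + 1) % 6 = 5) := by omega
    · obtain ⟨q, hq⟩ : ∃ q, n + 1 = 6 * (q + 1) := ⟨n / 6, by omega⟩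
      have hv := padicValNat_fib_six_mul (q + 1) (by omega)
      rw [hq, hv, show n / 6 = q by omega, show 6 * (q + 1) / 6 = q + 1 by omega,
        Nat.factorial_succ, padicValNat.mul (by omega) (Nat.factorial_ne_zero q)]
      omega
    · have hv : padicValNat 2 (Nat.fib (n + 1)) = 1 :=
        padicValNat_two_eq_of_mod (by rw [h] at hmod; norm_num at hmod ⊢; exact hmod)
      rw [hv, show (n + 1) / 6 = n / 6 by omega]
      omega
    · have hv : padicValNat 2 (Nat.fib (n + 1)) = 0 := by
        apply padicValNat.eq_zero_of_not_dvd
        rcases h with h | h | h | h <;> rw [h] at hmod <;> norm_num at hmod <;> omega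
      rw [hv, show (n + 1) / 6 = n / 6 by omega]
      omega

theorem two_adic_valuation_fibonomial
    (m k : ℕ) (hkm : k ≤ m)
    (A₂ : ℤ) (r s : ℕ)
    (hA : A₂ = (padicValNat 2 (Nat.factorial (m / 6)) : ℤ) - padicValNat 2 (Nat.factorial (k / 6))
          - padicValNat 2 (Nat.factorial ((m - k) / 6)))
    (hr : r = m % 6) (hs : s = k % 6) :
    (s ≤ r ∧ ¬(((r, s) : ℕ × ℕ) = (3, 1) ∨ ((r, s) : ℕ × ℕ) = (3, 2) ∨
        ((r, s) : ℕ × ℕ) = (4, 2)) →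
      (padicValNat 2 (fibBinom m k) : ℤ) = A₂) ∧
    ((((r, s) : ℕ × ℕ) = (3, 1) ∨ ((r, s) : ℕ × ℕ) = (3, 2) ∨
        ((r, s) : ℕ × ℕ) = (4, 2)) →
      (padicValNat 2 (fibBinom m k) : ℤ) = A₂ + 1) ∧
    (r < s ∧ ¬(((r, s) : ℕ × ℕ) = (0, 3) ∨ ((r, s) : ℕ × ℕ) = (1, 3) ∨
        ((r, s) : ℕ × ℕ) = (2, 3) ∨ ((r, s) : ℕ × ℕ) = (1, 4) ∨
        ((r, s) : ℕ × ℕ) = (2, 4) ∨ ((r, s) : ℕ × ℕ) = (2, 5)) →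
      (padicValNat 2 (fibBinom m k) : ℤ) = A₂ + 3) ∧
    ((((r, s) : ℕ × ℕ) = (0, 3) ∨ ((r, s) : ℕ × ℕ) = (1, 3) ∨
        ((r, s) : ℕ × ℕ) = (2, 3) ∨ ((r, s) : ℕ × ℕ) = (1, 4) ∨
        ((r, s) : ℕ × ℕ) = (2, 4) ∨ ((r, s) : ℕ × ℕ) = (2, 5)) →
      (padicValNat 2 (fibBinom m k) : ℤ) = A₂ + 2) := by
  obtain ⟨d, rfl⟩ := Nat.exists_eq_add_of_le' hkm
  have h := fibBinom_mul_fibonorial d k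
  have hne : fibBinom (d + k) k ≠ 0 := by
    intro h0
    rw [h0, zero_mul, zero_mul] at h
    exact fibonorial_ne_zero _ h.symm
  have hv := congrArg (padicValNat 2) h
  rw [padicValNat.mul (mul_ne_zero hne (fibonorial_ne_zero k)) (fibonorial_ne_zero d),
    padicValNat.mul hne (fibonorial_ne_zero k), padicValNat_fibonorial, padicValNat_fibonorial,
    padicValNat_fibonorial] at hv
  rw [Nat.add_sub_cancel] at hA
  simp only [Prod.mk.injEq]
  -- The remaining claim is linear arithmetic with floors, once the valuations are made opaque.
  generalize padicValNat 2 (fibBinom (d + k) k) = x at *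
  generalize padicValNat 2 ((d + k) / 6).factorial = y at *
  generalize padicValNat 2 (k / 6).factorial = z at *
  generalize padicValNat 2 (d / 6).factorial = w at *
  clear h hne hkm
  refine ⟨?_, ?_, ?_, ?_⟩ <;> intro hc <;> omega
end
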